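/- Let G be a connected chordal graph with a minimal rooted tree representation T, and let X be a rooted subtree of T with root x. Let 𝒫 be a family of longest paths of G such that X has the core capture property for 𝒫 and such that each endpoint of each P ∈ 𝒫 has a subtree containing a vertex outside X. Then there is a set A ⊆ V(G) that intersects each path in 𝒫 with |A| ≤ 4 · ccg(X, x). -/

import Mathlib

open SimpleGraph

/-- A graph is chordal if every cycle on at least 4 vertices has a chord
(an edge of the graph joining two vertices of the cycle that is not an edge of the cycle). -/
def IsChordal {V : Type} (G : SimpleGraph V) : Prop :=
  ∀ (v : V) (c : G.Walk v v), c.IsCycle → 4 ≤ c.length →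
    ∃ a b : V, a ∈ c.support ∧ b ∈ c.support ∧ G.Adj a b ∧ s(a, b) ∉ c.edges

/-- A tree representation of `G` with host tree `T`: each vertex `u` of `G` gets a
nonempty subtree `S u` of `T`, and distinct vertices are adjacent iff their subtrees meet. -/
structure TreeRep {V W : Type} (G : SimpleGraph V) (T : SimpleGraph W) : Type where
  isTree : T.IsTree
  S : V → Set W
  subtree_connected : ∀ u : V, (T.induce (S u)).Connected
  adj_iff : ∀ u v : V, u ≠ v → (G.Adj u v ↔ (S u ∩ S v).Nonempty)

/-- A tree representation is minimal if no tree representation of `G` has a host tree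
with fewer vertices. -/
def TreeRep.IsMinimal {V W : Type} [Fintype W] {G : SimpleGraph V} {T : SimpleGraph W}
    (_R : TreeRep G T) : Prop :=
  ∀ (W' : Type) [Fintype W'] (T' : SimpleGraph W'),
    Nonempty (TreeRep G T') → Fintype.card W ≤ Fintype.card W'

/-- The bag of a host tree vertex `x`. -/
def TreeRep.bag {V W : Type} {G : SimpleGraph V} {T : SimpleGraph W}
    (R : TreeRep G T) (x : W) : Set V :=
  {u : V | x ∈ R.S u}

/-- In `T` rooted at `r`, the (vertex set of the) subtree rooted at `x`: all vertices `w`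
such that the `r`–`w` path contains `x`. -/
def rootedSubtree {W : Type} (T : SimpleGraph W) (r x : W) : Set W :=
  {w : W | ∀ p : T.Walk r w, p.IsPath → x ∈ p.support}

/-- The core of a subgraph `H` of `G`: the union over edges `uv` of `H` of `V(S u ∩ S v)`,
a set of host-tree vertices. -/
def TreeRep.core {V W : Type} {G : SimpleGraph V} {T : SimpleGraph W}
    (R : TreeRep G T) (H : G.Subgraph) : Set W :=
  {t : W | ∃ u v : V, H.Adj u v ∧ t ∈ R.S u ∧ t ∈ R.S v}

/-- `C` is a connected component of the subgraph of `T` induced on the vertex set `s`. -/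
def IsCompOf {W : Type} (T : SimpleGraph W) (s C : Set W) : Prop :=
  C.Nonempty ∧ C ⊆ s ∧ (T.induce C).Connected ∧
    ∀ ⦃a b : W⦄, a ∈ C → b ∈ s → T.Adj a b → b ∈ C

/-- A graph is 2-connected if it has more than 2 vertices and deleting any one vertex
leaves it connected. -/
def TwoConnected {V : Type} (G : SimpleGraph V) : Prop :=
  2 < Nat.card V ∧ ∀ v : V, (G.induce {v}ᶜ).Connected

/-- `G` is `k`-connected: more than `k` vertices, and deleting fewer than `k` vertices
leaves it connected. -/
def IsKConnectedGraph {V : Type} (G : SimpleGraph V) (k : ℕ) : Prop :=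
  k < Nat.card V ∧ ∀ s : Set V, s.Finite → s.ncard < k → (G.induce sᶜ).Connected

/-- The vertex connectivity `κ(G)`: the maximum `k` such that `G` is `k`-connected. -/
noncomputable def vertexConnectivity {V : Type} (G : SimpleGraph V) : ℕ :=
  sSup {k : ℕ | IsKConnectedGraph G k}

/-- `p` is a path of maximum length in `G`. -/
def IsLongestPath {V : Type} (G : SimpleGraph V) {a b : V} (p : G.Walk a b) : Prop :=
  p.IsPath ∧ ∀ (c d : V) (q : G.Walk c d), q.IsPath → q.length ≤ p.length

/-- `c` is a cycle of maximum length in `G`. -/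
def IsLongestCycle {V : Type} (G : SimpleGraph V) {a : V} (c : G.Walk a a) : Prop :=
  c.IsCycle ∧ ∀ (d : V) (q : G.Walk d d), q.IsCycle → q.length ≤ c.length

/-- The longest path transversal number of `G`: the least size of a set of vertices
meeting every longest path. -/
noncomputable def lpt {V : Type} (G : SimpleGraph V) : ℕ :=
  sInf {k : ℕ | ∃ A : Set V, A.Finite ∧ A.ncard = k ∧
    ∀ (a b : V) (p : G.Walk a b), IsLongestPath G p → ∃ v ∈ A, v ∈ p.support}

/-- The longest cycle transversal number of `G`: the least size of a set of vertices
meeting every longest cycle. -/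
noncomputable def lct {V : Type} (G : SimpleGraph V) : ℕ :=
  sInf {k : ℕ | ∃ A : Set V, A.Finite ∧ A.ncard = k ∧
    ∀ (a : V) (c : G.Walk a a), IsLongestCycle G c → ∃ v ∈ A, v ∈ c.support}

/-- `DQX T q X Q0`: the union, over `y ∈ Q0`, of the component of `X − E(Q)` containing
`y` (all vertices joined to some `y ∈ Q0` by a walk inside `X` avoiding the edges of `q`). -/
def DQX {W : Type} (T : SimpleGraph W) {x z : W} (q : T.Walk x z) (X : Set W)
    (Q0 : Set W) : Set W :=
  {w : W | ∃ y ∈ Q0, ∃ d : (T.deleteEdges {e : Sym2 W | e ∈ q.edges}).Walk y w,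
    ∀ a ∈ d.support, a ∈ X}

/-- Cutter can force the Cutter–Chooser game from position `(X, x)` (a subtree `X` of the
host tree, rooted at `x`) to end within `t` rounds: Cutter picks `z ∈ X` and cuts along the
`x`–`z` path `Q` in `X`; either `X = Q` (game over), or for every component `X'` of
`X − V(Q)` (with its root `x'`, the vertex of `X'` adjacent to `Q`) that Chooser may pick,
Cutter wins within `t - 1` further rounds. -/
def cutterWins {W : Type} (T : SimpleGraph W) : ℕ → Set W → W → Prop
  | 0, _, _ => False
  | t + 1, X, x =>
      ∃ z ∈ X, ∃ p : T.Walk x z, p.IsPath ∧ (∀ w ∈ p.support, w ∈ X) ∧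
        (X = {w : W | w ∈ p.support} ∨
          ∀ (X' : Set W) (x' : W), IsCompOf T (X \ {w : W | w ∈ p.support}) X' →
            x' ∈ X' → (∃ u ∈ p.support, T.Adj u x') → cutterWins T t X' x')

/-- `ccg(X, x)`: the number of rounds of the Cutter–Chooser game on the subtree `X` of the
host tree rooted at `x`, under optimal play. -/
noncomputable def ccgOn {W : Type} (T : SimpleGraph W) (X : Set W) (x : W) : ℕ :=
  sInf {t : ℕ | cutterWins T t X x}

/-- `ccg(T)`: the minimum over roots `r` of `ccg(T, r)`. -/
noncomputable def ccg {W : Type} (T : SimpleGraph W) : ℕ :=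
  sInf (Set.range fun r : W => ccgOn T Set.univ r)

/-- A subdivided caterpillar: a tree having a (spine) path containing every vertex of
degree at least 3. -/
def IsSubdividedCaterpillar {W : Type} (T : SimpleGraph W) : Prop :=
  T.IsTree ∧ ∃ (a b : W) (q : T.Walk a b), q.IsPath ∧
    ∀ v : W, 3 ≤ (T.neighborSet v).ncard → v ∈ q.support

/-- A subdivided star: a tree with at most one vertex of degree at least 3. -/
def IsSubdividedStar {W : Type} (T : SimpleGraph W) : Prop :=
  T.IsTree ∧ ∀ v w : W, 3 ≤ (T.neighborSet v).ncard → 3 ≤ (T.neighborSet w).ncard → v = w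

/-- A leaf: a vertex of degree 1. -/
def IsLeaf {W : Type} (T : SimpleGraph W) (v : W) : Prop := (T.neighborSet v).ncard = 1

/-- `mf T`: the maximum over edges `e` of `T` of the minimum number of leaves of `T`
contained in a component of `T − e`. -/
noncomputable def mf {W : Type} (T : SimpleGraph W) : ℕ :=
  sSup {k : ℕ | ∃ u v : W, T.Adj u v ∧
    k = min {w : W | IsLeaf T w ∧ (T.deleteEdges {s(u, v)}).Reachable u w}.ncard
            {w : W | IsLeaf T w ∧ (T.deleteEdges {s(u, v)}).Reachable v w}.ncard}

/-- In `T` rooted at `r`, `v` is a child of `u`. -/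
def IsChildIn {W : Type} (T : SimpleGraph W) (r u v : W) : Prop :=
  T.Adj u v ∧ ∀ p : T.Walk r v, p.IsPath → u ∈ p.support

/-- In `T` rooted at `r`, `u` is childless. -/
def IsChildlessIn {W : Type} (T : SimpleGraph W) (r u : W) : Prop :=
  ¬ ∃ v : W, IsChildIn T r u v

/-!
Every connected set of host-tree vertices that meets `X` and leaves it contains the gate `x`.
Let `Q` be Cutter's first path, and let `v` be a vertex of `G` whose subtree contains `x` and,
among these, reaches as far as possible along `Q`. A longest path `P` missing `v` has a core
disjoint from `S v`, since otherwise `v` could be inserted between two consecutive vertices of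
`P`. Hence `P` makes an *excursion*: it goes from some `u` with `x ∈ S u` through vertices whose
subtrees lie in `X` and avoid `S v`, up to some `w` whose subtree meets `S v`. By the choice of `v`
the subtrees along the excursion avoid `Q`, so they lie in a single component `X'` of `X - Q`.

Take the longest excursion over all paths missing `v`. A path `P'` missing `v`, `u`, `w` and all the
inner vertices of this excursion could be made longer by replacing its own excursion with the detour
through `u`, these inner vertices, `w` and `v`. So every path missing `v`, `u` and `w` has core in
`X'`, and the next round takes over; each round costs three vertices.
-/

section Walks

variable {V : Type*} {G : SimpleGraph V}

theorem exists_eq_append_cons_of_not (good : V → Prop) {a b : V} (p : G.Walk a b)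
    (ha : good a) (hb : ¬ good b) :
    ∃ (u y : V) (α : G.Walk a u) (h : G.Adj u y) (β : G.Walk y b),
      p = α.append (.cons h β) ∧ (∀ z ∈ α.support, good z) ∧ ¬ good y := by
  induction p with
  | nil => exact absurd ha hb
  | @cons a d b h p ih =>
    by_cases hd : good d
    · obtain ⟨u, y, α, h', β, rfl, hα, hy⟩ := ih hd hb
      exact ⟨u, y, .cons h α, h', β, rfl, by simpa [ha] using hα, hy⟩
    · exact ⟨a, d, .nil, h, p, rfl, by simpa using ha, hd⟩

theorem exists_isPath_support_subset {C : Set V} (hC : (G.induce C).Preconnected) {s t : V}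
    (hs : s ∈ C) (ht : t ∈ C) : ∃ p : G.Walk s t, p.IsPath ∧ ∀ w ∈ p.support, w ∈ C := by
  obtain ⟨q, hq⟩ := (hC ⟨s, hs⟩ ⟨t, ht⟩).exists_isPath
  refine ⟨q.map (Embedding.induce C).toHom, hq.map Subtype.val_injective, ?_⟩
  intro w hw
  obtain ⟨z, -, rfl⟩ := List.mem_map.1 (Walk.support_map (Embedding.induce C).toHom q ▸ hw)
  exact z.2

end Walks

section Forests

variable {W : Type*} {T : SimpleGraph W} {A B C : Set W}

theorem support_subset_of_isPath (hT : T.IsAcyclic) (hC : (T.induce C).Preconnected) {s t : W}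
    (hs : s ∈ C) (ht : t ∈ C) {p : T.Walk s t} (hp : p.IsPath) : ∀ w ∈ p.support, w ∈ C := by
  obtain ⟨q, hq, hqC⟩ := exists_isPath_support_subset hC hs ht
  have hpq : p = q := congrArg Subtype.val ((hT.subsingleton_path s t).elim ⟨p, hp⟩ ⟨q, hq⟩)
  exact hpq ▸ hqC

theorem mem_or_mem_of_adj_of_inter_nonempty (hT : T.IsAcyclic) (hB : (T.induce B).Preconnected)
    (hC : (T.induce C).Preconnected) (hBC : (B ∩ C).Nonempty) {b c : W} (hb : b ∈ B) (hc : c ∈ C)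
    (hadj : T.Adj b c) : c ∈ B ∨ b ∈ C := by
  obtain ⟨m, hmB, hmC⟩ := hBC
  obtain ⟨q, hq, hqC⟩ := exists_isPath_support_subset hC hc hmC
  refine or_iff_not_imp_right.2 fun hbC => ?_
  have hpath : (Walk.cons hadj q).IsPath := hq.cons fun hbq => hbC (hqC b hbq)
  exact support_subset_of_isPath hT hB hb hmB hpath c (by simp)

theorem helly_three (hT : T.IsAcyclic) (hA : (T.induce A).Preconnected)
    (hB : (T.induce B).Preconnected) (hC : (T.induce C).Preconnected) (hAB : (A ∩ B).Nonempty)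
    (hBC : (B ∩ C).Nonempty) (hAC : (A ∩ C).Nonempty) : (A ∩ B ∩ C).Nonempty := by
  obtain ⟨s, hsA, hsB⟩ := hAB
  obtain ⟨t, htA, htC⟩ := hAC
  by_cases htB : t ∈ B
  · exact ⟨t, ⟨htA, htB⟩, htC⟩
  obtain ⟨p, hp, hpA⟩ := exists_isPath_support_subset hA hsA htA
  have hpBC : ∀ w ∈ p.support, w ∈ B ∪ C :=
    support_subset_of_isPath hT (induce_union_connected hB hC hBC).preconnected
      (.inl hsB) (.inr htC) hp
  obtain ⟨d, hd, hdB, hdB'⟩ := p.exists_boundary_dart B hsB htB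
  have hdC : d.snd ∈ C := (hpBC _ (p.dart_snd_mem_support_of_mem_darts hd)).resolve_left hdB'
  have hdC' : d.fst ∈ C :=
    (mem_or_mem_of_adj_of_inter_nonempty hT hB hC hBC hdB hdC d.adj).resolve_left hdB'
  exact ⟨d.fst, ⟨hpA _ (p.dart_fst_mem_support_of_mem_darts hd), hdB⟩, hdC'⟩

theorem eq_of_adj_of_adj_of_disjoint (hT : T.IsAcyclic) (hA : (T.induce A).Preconnected)
    (hB : (T.induce B).Preconnected) (hAB : Disjoint A B) {a a' b b' : W} (ha : a ∈ A)
    (ha' : a' ∈ A) (hb : b ∈ B) (hb' : b' ∈ B) (h : T.Adj a b) (h' : T.Adj a' b') : a = a' := by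
  obtain ⟨p, hp, hpA⟩ := exists_isPath_support_subset hA ha' ha
  have hpath : (Walk.cons h'.symm p).IsPath :=
    hp.cons fun hb'p => hAB.notMem_of_mem_left (hpA _ hb'p) hb'
  have hBa : (T.induce (B ∪ {a})).Connected :=
    connected_induce_union hB .of_subsingleton hb rfl h.symm
  have ha'B : a' ∈ B ∪ {a} :=
    support_subset_of_isPath hT hBa.preconnected (.inl hb') (.inr rfl) hpath a' (by simp)
  exact (ha'B.resolve_left (hAB.notMem_of_mem_left ha')).symm

theorem exists_farthest_reaching_along_path {V : Type*} (hT : T.IsAcyclic) {S : V → Set W}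
    (hS : ∀ u, (T.induce (S u)).Preconnected) {x z : W} {p : T.Walk x z} (hp : p.IsPath)
    {U : Set V} (hU : U.Nonempty) (hxU : ∀ u ∈ U, x ∈ S u) :
    ∃ v ∈ U, ∀ u ∈ U, ∀ q ∈ p.support, q ∈ S u → q ∈ S v := by
  classical
  induction p generalizing U with
  | nil =>
    obtain ⟨v, hv⟩ := hU
    exact ⟨v, hv, fun u _ q hq _ => List.mem_singleton.1 hq ▸ hxU v hv⟩
  | @cons x y z h p ih =>
    have hmem_snd : ∀ u ∈ U, ∀ q ∈ p.support, q ∈ S u → y ∈ S u := by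
      intro u hu q hq hqu
      have hpath : (Walk.cons h (p.takeUntil q hq)).IsPath :=
        (hp.of_cons.takeUntil hq).cons fun hx =>
          ((Walk.cons_isPath_iff h p).1 hp).2 (p.support_takeUntil_subset_support hq hx)
      exact support_subset_of_isPath hT (hS u) (hxU u hu) hqu hpath y (by simp)
    by_cases hUy : (U ∩ {u | y ∈ S u}).Nonempty
    · obtain ⟨v, ⟨hvU, -⟩, hv⟩ := ih hp.of_cons hUy fun u hu => hu.2
      refine ⟨v, hvU, fun u hu q hq hqu => ?_⟩
      rcases List.mem_cons.1 hq with rfl | hq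
      · exact hxU v hvU
      · exact hv u ⟨hu, hmem_snd u hu q hq hqu⟩ q hq hqu
    · obtain ⟨v, hv⟩ := hU
      refine ⟨v, hv, fun u hu q hq hqu => ?_⟩
      rcases List.mem_cons.1 hq with rfl | hq
      · exact hxU v hv
      · exact (hUy ⟨u, hu, hmem_snd u hu q hq hqu⟩).elim

end Forests

section Gates

variable {W : Type} {T : SimpleGraph W}

theorem exists_isCompOf_superset {s Y : Set W} (hY : (T.induce Y).Connected) (hYs : Y ⊆ s) :
    ∃ C, IsCompOf T s C ∧ Y ⊆ C := by
  let 𝒵 : Set (Set W) := {Z | Y ⊆ Z ∧ Z ⊆ s ∧ (T.induce Z).Connected}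
  have hY𝒵 : Y ∈ 𝒵 := ⟨subset_rfl, hYs, hY⟩
  obtain ⟨y, hy⟩ := hY.nonempty
  refine ⟨⋃₀ 𝒵, ⟨⟨y, Y, hY𝒵, hy⟩, Set.sUnion_subset fun Z hZ => hZ.2.1, ?_, ?_⟩,
    Set.subset_sUnion_of_mem hY𝒵⟩
  · exact induce_sUnion_connected_of_pairwise_not_disjoint ⟨Y, hY𝒵⟩
      (fun hZ hZ' => ⟨y, hZ.1 hy, hZ'.1 hy⟩) fun hZ => hZ.2.2
  · rintro c d ⟨Z, ⟨hYZ, hZs, hZ⟩, hcZ⟩ hd hcd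
    refine ⟨Z ∪ {d}, ⟨hYZ.trans Set.subset_union_left, ?_, ?_⟩, .inr rfl⟩
    · exact Set.union_subset hZs (Set.singleton_subset_iff.2 hd)
    · exact connected_induce_union hZ.preconnected .of_subsingleton hcZ rfl hcd

/-- `x` is the gate of `X`: no other vertex of `X` has a neighbour outside `X`. This is what
remains of `X` being a subtree rooted at `x` once the root of the ambient tree is forgotten, and it
passes to the components presented to Cutter. The membership `x ∈ X` is not part of it. -/
def IsGate (T : SimpleGraph W) (X : Set W) (x : W) : Prop :=
  ∀ ⦃c d : W⦄, c ∈ X → d ∉ X → T.Adj c d → c = x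

theorem isGate_rootedSubtree (T : SimpleGraph W) (r x : W) : IsGate T (rootedSubtree T r x) x := by
  classical
  intro c d hc hd hcd
  simp only [rootedSubtree, Set.mem_ofPred_eq, not_forall] at hd
  obtain ⟨p, -, hxp⟩ := hd
  have hx : x ∈ (p.concat hcd.symm).support :=
    Walk.support_bypass_subset_support _ (hc _ (Walk.bypass_isPath _))
  rw [Walk.support_concat, List.mem_append, List.mem_singleton] at hx
  exact (hx.resolve_left hxp).symm

namespace IsGate

variable {X X' Q C : Set W} {x x' : W}

theorem mem_of_preconnected (hgate : IsGate T X x) (hC : (T.induce C).Preconnected)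
    (hCX : (C ∩ X).Nonempty) (hCX' : ¬ C ⊆ X) : x ∈ C := by
  obtain ⟨s, hsC, hsX⟩ := hCX
  obtain ⟨t, htC, htX⟩ := Set.not_subset.1 hCX'
  obtain ⟨p, -, hpC⟩ := exists_isPath_support_subset hC hsC htC
  obtain ⟨d, hd, hdX, hdX'⟩ := p.exists_boundary_dart X hsX htX
  exact hgate hdX hdX' d.adj ▸ hpC _ (p.dart_fst_mem_support_of_mem_darts hd)

theorem mem_of_isCompOf_of_adj (hgate : IsGate T X x) (hxQ : x ∈ Q) (hX' : IsCompOf T (X \ Q) X')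
    {c d : W} (hc : c ∈ X') (hd : d ∉ X') (hcd : T.Adj c d) : d ∈ Q := by
  obtain ⟨-, hsub, -, hclosed⟩ := hX'
  by_contra hdQ
  have hdX : d ∉ X := fun hdX => hd (hclosed hc ⟨hdX, hdQ⟩ hcd)
  exact (hsub hc).2 (hgate (hsub hc).1 hdX hcd ▸ hxQ)

theorem of_isCompOf (hT : T.IsAcyclic) (hgate : IsGate T X x) (hQ : (T.induce Q).Preconnected)
    (hxQ : x ∈ Q) (hX' : IsCompOf T (X \ Q) X') (hx' : x' ∈ X') (hadj : ∃ u ∈ Q, T.Adj u x') :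
    IsGate T X' x' := by
  intro c d hc hd hcd
  obtain ⟨u, hu, hux'⟩ := hadj
  have hdisj : Disjoint X' Q := Set.disjoint_sdiff_left.mono_left hX'.2.1
  exact eq_of_adj_of_adj_of_disjoint hT hX'.2.2.1.preconnected hQ hdisj hc hx'
    (hgate.mem_of_isCompOf_of_adj hxQ hX' hc hd hcd) hu hcd hux'.symm

theorem exists_root_of_isCompOf (hT : T.Preconnected) (hgate : IsGate T X x) (hxQ : x ∈ Q)
    (hX' : IsCompOf T (X \ Q) X') : ∃ x' ∈ X', ∃ u ∈ Q, T.Adj u x' := by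
  obtain ⟨t, ht⟩ := hX'.1
  obtain ⟨p⟩ := hT t x
  obtain ⟨d, -, hd, hd'⟩ := p.exists_boundary_dart X' ht fun hx => (hX'.2.1 hx).2 hxQ
  exact ⟨d.fst, hd, d.snd, hgate.mem_of_isCompOf_of_adj hxQ hX' hd hd' d.adj, d.adj.symm⟩

end IsGate

end Gates

section LongestPaths

variable {V : Type} {G : SimpleGraph V} {a b u v y : V} {P : G.Walk a b}

theorem IsLongestPath.mem_support_of_isSubwalk (hP : IsLongestPath G P) {h : G.Adj u y}
    (hsub : h.toWalk.IsSubwalk P) (huv : G.Adj u v) (hvy : G.Adj v y) : v ∈ P.support := by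
  obtain ⟨α, β, rfl⟩ := hsub
  by_contra hv
  have hsupport : ((α.append h.toWalk).append β).support = α.support ++ β.support := by
    simp [Walk.support_append]
  have hsupport' : (α.append (.cons huv (.cons hvy β))).support = α.support ++ v :: β.support := by
    simp [Walk.support_append]
  have hpath : (α.append (.cons huv (.cons hvy β))).IsPath := by
    have hnodup := hP.1.support_nodup
    rw [hsupport] at hv
    rw [hsupport, List.nodup_append] at hnodup
    rw [Walk.isPath_def, hsupport', List.nodup_append]
    grind
  have hlen := hP.2 _ _ _ hpath
  simp only [Walk.length_append, Walk.length_cons, Walk.length_nil] at hlen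
  omega

theorem IsLongestPath.mem_support_of_adj_of_adj (hP : IsLongestPath G P)
    (huy : s(u, y) ∈ P.edges) (huv : G.Adj u v) (hvy : G.Adj v y) : v ∈ P.support := by
  rcases (Walk.isSubwalk_toWalk_iff_mem_edges (P.adj_of_mem_edges huy)).2 huy with hsub | hsub
  · exact hP.mem_support_of_isSubwalk hsub huv hvy
  · exact hP.mem_support_of_isSubwalk hsub hvy.symm huv.symm

end LongestPaths

section TreeRepresentations

variable {V W : Type} {G : SimpleGraph V} {T : SimpleGraph W} {R : TreeRep G T}
  {X : Set W} {x : W} {a b v : V} {P : G.Walk a b}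

namespace TreeRep

variable (R)

theorem preconnected (u : V) : (T.induce (R.S u)).Preconnected :=
  (R.subtree_connected u).preconnected

theorem inter_nonempty_of_adj {u v : V} (h : G.Adj u v) : (R.S u ∩ R.S v).Nonempty :=
  (R.adj_iff u v h.ne).1 h

theorem adj_of_mem_of_mem {u v : V} (hne : u ≠ v) {t : W} (hu : t ∈ R.S u) (hv : t ∈ R.S v) :
    G.Adj u v :=
  (R.adj_iff u v hne).2 ⟨t, hu, hv⟩

theorem connected_induce_iUnion_support (p : G.Walk a b) :
    (T.induce (⋃ z ∈ p.support, R.S z)).Connected := by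
  induction p with
  | @nil u =>
    have hunion : ⋃ z ∈ (Walk.nil : G.Walk u u).support, R.S z = R.S u := by simp
    exact hunion ▸ R.subtree_connected u
  | @cons u d b h p ih =>
    have hunion : ⋃ z ∈ (Walk.cons h p).support, R.S z = R.S u ∪ ⋃ z ∈ p.support, R.S z := by
      simp [Set.iUnion_or, Set.iUnion_union_distrib]
    rw [hunion]
    obtain ⟨t, htu, htd⟩ := R.inter_nonempty_of_adj h
    exact induce_union_connected (R.preconnected u) ih.preconnected
      ⟨t, htu, Set.mem_biUnion p.start_mem_support htd⟩

theorem core_inter_nonempty_of_mem_support {c : V} (hc : c ∈ P.support) (hac : a ≠ c) :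
    (R.core P.toSubgraph ∩ R.S c).Nonempty := by
  classical
  obtain ⟨d, hd, -, hdc⟩ := (P.takeUntil c hc).exists_boundary_dart {c}ᶜ hac (by simp)
  obtain rfl : d.snd = c := not_not.1 hdc
  have hadj : P.toSubgraph.Adj d.fst d.snd := Walk.adj_toSubgraph_iff_mem_edges.2
    (P.edges_takeUntil_subset_edges hc (List.mem_map_of_mem hd))
  obtain ⟨t, ht, ht'⟩ := R.inter_nonempty_of_adj d.adj
  exact ⟨t, ⟨d.fst, d.snd, hadj, ht, ht'⟩, ht'⟩

theorem disjoint_core (hP : IsLongestPath G P) (hv : v ∉ P.support) :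
    Disjoint (R.core P.toSubgraph) (R.S v) := by
  refine Set.disjoint_left.2 ?_
  rintro t ⟨u, y, huy, hu, hy⟩ htv
  have huv : u ≠ v := fun huv => hv (huv ▸ Walk.mem_support_of_adj_toSubgraph huy)
  have hyv : y ≠ v := fun hyv => hv (hyv ▸ Walk.mem_support_of_adj_toSubgraph huy.symm)
  exact hv (hP.mem_support_of_adj_of_adj (Walk.adj_toSubgraph_iff_mem_edges.1 huy)
    (R.adj_of_mem_of_mem huv hu htv) (R.adj_of_mem_of_mem hyv.symm htv hy))

theorem disjoint_of_adj_toSubgraph (hP : IsLongestPath G P) (hv : v ∉ P.support) {u y : V}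
    (huy : P.toSubgraph.Adj u y) (huv : (R.S u ∩ R.S v).Nonempty) :
    Disjoint (R.S y) (R.S v) := by
  by_contra hyv
  obtain ⟨t, ⟨htu, hty⟩, htv⟩ := helly_three R.isTree.isAcyclic (R.preconnected u)
    (R.preconnected y) (R.preconnected v) (R.inter_nonempty_of_adj huy.adj_sub)
    (Set.not_disjoint_iff_nonempty_inter.1 hyv) huv
  exact Set.disjoint_left.1 (R.disjoint_core hP hv) ⟨u, y, huy, htu, hty⟩ htv

theorem bag_nonempty_of_core_inter_nonempty (hgate : IsGate T X x) (ha : ¬ R.S a ⊆ X)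
    (hcap : (R.core P.toSubgraph ∩ X).Nonempty) : (R.bag x).Nonempty := by
  obtain ⟨t, ⟨c, d, hcd, htc, -⟩, htX⟩ := hcap
  have hx : x ∈ ⋃ z ∈ P.support, R.S z :=
    hgate.mem_of_preconnected (R.connected_induce_iUnion_support P).preconnected
      ⟨t, Set.mem_biUnion (Walk.mem_support_of_adj_toSubgraph hcd) htc, htX⟩
      fun hsub => ha fun s hs => hsub (Set.mem_biUnion P.start_mem_support hs)
  obtain ⟨u, -, hxu⟩ := Set.mem_iUnion₂.1 hx
  exact ⟨u, hxu⟩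

theorem exists_mem_support_subset (hgate : IsGate T X x) (hxv : x ∈ R.S v)
    (hP : IsLongestPath G P) (hv : v ∉ P.support) (hcap : (R.core P.toSubgraph ∩ X).Nonempty) :
    ∃ c ∈ P.support, R.S c ⊆ X := by
  obtain ⟨t, ⟨c, d, hcd, htc, htd⟩, htX⟩ := hcap
  by_contra! hleave
  have hxc : x ∈ R.S c := hgate.mem_of_preconnected (R.preconnected c) ⟨t, htc, htX⟩
    (hleave c (Walk.mem_support_of_adj_toSubgraph hcd))
  have hxd : x ∈ R.S d := hgate.mem_of_preconnected (R.preconnected d) ⟨t, htd, htX⟩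
    (hleave d (Walk.mem_support_of_adj_toSubgraph hcd.symm))
  exact Set.disjoint_left.1 (R.disjoint_core hP hv) ⟨c, d, hcd, hxc, hxd⟩ hxv

theorem exists_entering_edge (hgate : IsGate T X x) (ha : ¬ R.S a ⊆ X) {c : V}
    (hc : c ∈ P.support) (hcX : R.S c ⊆ X) :
    ∃ (u y : V) (α : G.Walk a u) (h : G.Adj u y) (β : G.Walk y b),
      P = α.append (.cons h β) ∧ x ∈ R.S u ∧ R.S y ⊆ X := by
  classical
  obtain ⟨u, y, α, h, β, hαβ, hα, hy⟩ := exists_eq_append_cons_of_not (¬ R.S · ⊆ X)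
    (P.takeUntil c hc) ha (not_not.2 hcX)
  have hyX : R.S y ⊆ X := not_not.1 hy
  refine ⟨u, y, α, h, β.append (P.dropUntil c hc), ?_, ?_, hyX⟩
  · rw [← Walk.cons_append, Walk.append_assoc, ← hαβ, P.take_spec hc]
  · obtain ⟨s, hsu, hsy⟩ := R.inter_nonempty_of_adj h
    exact hgate.mem_of_preconnected (R.preconnected u) ⟨s, hsu, hyX hsy⟩
      (hα u α.end_mem_support)

end TreeRep

/-- An excursion of a path `P` missing `v` into the subtree `X` with gate `x`: a decomposition
of `P` into `before` (ending at `entry`), `inner` and `after` (starting at `exit`) in which the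
subtree of `entry` contains the gate, the subtrees of the inner vertices lie in `X` and avoid that
of `v`, and the subtree of `exit` meets that of `v`. Excursions of different paths for the same `v`
can be exchanged. -/
structure Excursion (R : TreeRep G T) (X : Set W) (x : W) (v : V) (P : G.Walk a b) where
  entry : V
  first : V
  last : V
  exit : V
  before : G.Walk a entry
  adj_entry : G.Adj entry first
  inner : G.Walk first last
  adj_exit : G.Adj last exit
  after : G.Walk exit b
  eq_append : P = before.append (.cons adj_entry (inner.append (.cons adj_exit after)))
  notMem_support : v ∉ P.support
  gate_mem_entry : x ∈ R.S entry
  subset_of_mem_inner : ∀ z ∈ inner.support, R.S z ⊆ X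
  disjoint_of_mem_inner : ∀ z ∈ inner.support, Disjoint (R.S z) (R.S v)
  exit_inter_nonempty : (R.S exit ∩ R.S v).Nonempty

theorem TreeRep.nonempty_excursion (R : TreeRep G T) (hgate : IsGate T X x) (hxv : x ∈ R.S v)
    (hP : IsLongestPath G P) (hv : v ∉ P.support) (ha : ¬ R.S a ⊆ X) (hb : ¬ R.S b ⊆ X)
    (hcap : (R.core P.toSubgraph ∩ X).Nonempty) : Nonempty (Excursion R X x v P) := by
  obtain ⟨c, hc, hcX⟩ := R.exists_mem_support_subset hgate hxv hP hv hcap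
  obtain ⟨u, y, α, h, β, hαβ, hxu, hyX⟩ := R.exists_entering_edge hgate ha hc hcX
  have huy : P.toSubgraph.Adj u y := Walk.adj_toSubgraph_iff_mem_edges.2 (by simp [hαβ])
  have hyv : Disjoint (R.S y) (R.S v) := R.disjoint_of_adj_toSubgraph hP hv huy ⟨x, hxu, hxv⟩
  obtain ⟨y', w, σ, h', γ, rfl, hσ, hw⟩ :=
    exists_eq_append_cons_of_not (fun z => R.S z ⊆ X ∧ Disjoint (R.S z) (R.S v)) β
      ⟨hyX, hyv⟩ fun hbX => hb hbX.1
  have hwv : (R.S w ∩ R.S v).Nonempty := by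
    by_cases hwX : R.S w ⊆ X
    · exact Set.not_disjoint_iff_nonempty_inter.1 fun hdisj => hw ⟨hwX, hdisj⟩
    · obtain ⟨s, hsy', hsw⟩ := R.inter_nonempty_of_adj h'
      have hsX : s ∈ X := (hσ y' σ.end_mem_support).1 hsy'
      exact ⟨x, hgate.mem_of_preconnected (R.preconnected w) ⟨s, hsw, hsX⟩ hwX, hxv⟩
  exact ⟨⟨u, y, y', w, α, h, σ, h', γ, hαβ, hv, hxu, fun z hz => (hσ z hz).1,
    fun z hz => (hσ z hz).2, hwv⟩⟩

namespace Excursion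

theorem support_eq (E : Excursion R X x v P) :
    P.support = E.before.support ++ (E.inner.support ++ E.after.support) := by
  conv_lhs => rw [E.eq_append]
  simp [Walk.support_append]

theorem length_eq (E : Excursion R X x v P) :
    P.length = E.before.length + E.inner.length + E.after.length + 2 := by
  conv_lhs => rw [E.eq_append]
  simp only [Walk.length_append, Walk.length_cons]
  omega

variable {a' b' : V} {P' : G.Walk a' b'}

theorem adj_exit_apex (E : Excursion R X x v P) : G.Adj E.exit v := by
  obtain ⟨t, htw, htv⟩ := E.exit_inter_nonempty
  refine R.adj_of_mem_of_mem (fun hwv => E.notMem_support ?_) htw htv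
  simp [E.support_eq, ← hwv]

theorem adj_entry_entry (E : Excursion R X x v P) (E' : Excursion R X x v P')
    (hentry : E.entry ∉ P'.support) : G.Adj E'.entry E.entry := by
  refine R.adj_of_mem_of_mem (fun heq => hentry ?_) E'.gate_mem_entry E.gate_mem_entry
  simp [E'.support_eq, ← heq]

theorem exists_mem_inner_mem_support (E : Excursion R X x v P) (hP : P.IsPath)
    (E' : Excursion R X x v P') (hP' : IsLongestPath G P')
    (hle : E'.inner.length ≤ E.inner.length) (hentry : E.entry ∉ P'.support)
    (hexit : E.exit ∉ P'.support) : ∃ z ∈ E.inner.support, z ∈ P'.support := by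
  by_contra! hinner
  let detour : G.Walk a' b' := E'.before.append (.cons (E.adj_entry_entry E' hentry)
    (.cons E.adj_entry (E.inner.append (.cons E.adj_exit (.cons E.adj_exit_apex
      (.cons E'.adj_exit_apex.symm E'.after))))))
  have hsupport : detour.support = E'.before.support ++
      (E.entry :: (E.inner.support ++ (E.exit :: v :: E'.after.support))) := by
    simp [detour, Walk.support_append]
  have hlength : detour.length = E'.before.length + E.inner.length + E'.after.length + 5 := by
    simp only [detour, Walk.length_append, Walk.length_cons]
    omega
  have hdetour : detour.IsPath := by
    have hnodup := hP.support_nodup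
    have hnodup' := hP'.1.support_nodup
    have hv := E.notMem_support
    have hv' := E'.notMem_support
    have hmem_entry := E.before.end_mem_support
    have hmem_exit := E.after.start_mem_support
    rw [E.support_eq] at hnodup hv
    rw [E'.support_eq] at hnodup' hv' hentry hexit hinner
    rw [Walk.isPath_def, hsupport]
    simp only [List.nodup_append, List.nodup_cons, List.mem_append, List.mem_cons]
      at hnodup hnodup' hv hv' hentry hexit hinner ⊢
    grind
  have hlongest := hP'.2 _ _ detour hdetour
  have hlength' := E'.length_eq
  omega

theorem core_inter_iUnion_nonempty (E : Excursion R X x v P) (hP : P.IsPath)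
    (E' : Excursion R X x v P') (hP' : IsLongestPath G P') (ha' : ¬ R.S a' ⊆ X)
    (hle : E'.inner.length ≤ E.inner.length) (hentry : E.entry ∉ P'.support)
    (hexit : E.exit ∉ P'.support) :
    (R.core P'.toSubgraph ∩ ⋃ z ∈ E.inner.support, R.S z).Nonempty := by
  obtain ⟨c, hcE, hcP'⟩ := E.exists_mem_inner_mem_support hP E' hP' hle hentry hexit
  have ha'c : a' ≠ c := fun ha'c => ha' (ha'c ▸ E.subset_of_mem_inner c hcE)
  exact (R.core_inter_nonempty_of_mem_support hcP' ha'c).mono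
    (Set.inter_subset_inter_right _ (Set.subset_biUnion_of_mem hcE))

theorem iUnion_inner_subset_diff (E : Excursion R X x v P) {Q : Set W}
    (hQ : (T.induce Q).Preconnected) (hxQ : x ∈ Q)
    (hv : ∀ u ∈ R.bag x, ∀ q ∈ Q, q ∈ R.S u → q ∈ R.S v) :
    ⋃ z ∈ E.inner.support, R.S z ⊆ X \ Q := by
  refine fun t ht => ⟨Set.iUnion₂_subset E.subset_of_mem_inner ht, fun htQ => ?_⟩
  obtain ⟨s, hs, hs'⟩ := R.inter_nonempty_of_adj E.adj_entry
  obtain ⟨m, ⟨hm_entry, hm_inner⟩, hmQ⟩ := helly_three R.isTree.isAcyclic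
    (R.preconnected E.entry) (R.connected_induce_iUnion_support E.inner).preconnected hQ
    ⟨s, hs, Set.mem_biUnion E.inner.start_mem_support hs'⟩ ⟨t, ht, htQ⟩
    ⟨x, E.gate_mem_entry, hxQ⟩
  obtain ⟨z, hz, hmz⟩ := Set.mem_iUnion₂.1 hm_inner
  exact Set.disjoint_left.1 (E.disjoint_of_mem_inner z hz) hmz
    (hv _ E.gate_mem_entry m hmQ hm_entry)

variable {ι : Type*} {a b : ι → V} {P : ∀ i, G.Walk (a i) (b i)}

theorem exists_forall_inner_length_le (hP : ∀ i, IsLongestPath G (P i)) {i₀ : ι}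
    (E₀ : Excursion R X x v (P i₀)) :
    ∃ (i : ι) (E : Excursion R X x v (P i)),
      ∀ (j : ι) (E' : Excursion R X x v (P j)), E'.inner.length ≤ E.inner.length := by
  let innerLength (e : Σ i, Excursion R X x v (P i)) : ℕ := e.2.inner.length
  have hbdd : BddAbove (Set.range innerLength) := by
    refine ⟨(P i₀).length, ?_⟩
    rintro _ ⟨⟨j, E⟩, rfl⟩
    calc E.inner.length ≤ (P j).length := by rw [E.length_eq]; omega
      _ ≤ (P i₀).length := (hP i₀).2 _ _ _ (hP j).1
  obtain ⟨⟨i, E⟩, hE⟩ := Nat.sSup_mem ⟨_, Set.mem_range_self ⟨i₀, E₀⟩⟩ hbdd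
  exact ⟨i, E, fun j E' => (le_csSup hbdd ⟨⟨j, E'⟩, rfl⟩).trans hE.ge⟩

end Excursion

end TreeRepresentations

section Game

variable {V W : Type} {G : SimpleGraph V} {T : SimpleGraph W} {X : Set W} {x : W}

theorem cutterWins_of_ncard_le {n : ℕ} (hX : X.Finite) (hx : x ∈ X) (hn : X.ncard ≤ n) :
    cutterWins T n X x := by
  induction n generalizing X x with
  | zero => exact absurd hn (Nat.not_le.2 ((Set.ncard_pos hX).2 ⟨x, hx⟩))
  | succ n ih =>
    refine ⟨x, hx, .nil, .nil, by simpa using hx, .inr fun X' x' hX' hx' _ => ?_⟩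
    have hssub : X' ⊂ X := ⟨fun s hs => (hX'.2.1 hs).1, fun hsub => (hX'.2.1 (hsub hx)).2 (by simp)⟩
    have hlt : X'.ncard < X.ncard := Set.ncard_lt_ncard hssub hX
    exact ih (hX.subset hssub.subset) hx' (by omega)

theorem cutterWins_ccgOn (hX : X.Finite) (hx : x ∈ X) : cutterWins T (ccgOn T X x) X x :=
  Nat.sInf_mem (s := {t | cutterWins T t X x}) ⟨X.ncard, cutterWins_of_ncard_le hX hx le_rfl⟩

variable (R : TreeRep G T) {ι : Type*} {a b : ι → V} (P : ∀ i, G.Walk (a i) (b i))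

theorem TreeRep.exists_three_of_cut [Nonempty ι] (hgate : IsGate T X x) {z : W} {p : T.Walk x z}
    (hp : p.IsPath) (hP : ∀ i, IsLongestPath G (P i))
    (hcap : ∀ i, (R.core (P i).toSubgraph ∩ X).Nonempty)
    (ha : ∀ i, ¬ R.S (a i) ⊆ X) (hb : ∀ i, ¬ R.S (b i) ⊆ X) :
    ∃ B : Finset V, B.card ≤ 3 ∧ ((∀ i, ∃ v ∈ B, v ∈ (P i).support) ∨
      ∃ X' x', IsCompOf T (X \ {w | w ∈ p.support}) X' ∧ x' ∈ X' ∧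
        (∃ u ∈ p.support, T.Adj u x') ∧
        ∀ i, (∀ v ∈ B, v ∉ (P i).support) → (R.core (P i).toSubgraph ∩ X').Nonempty) := by
  classical
  obtain ⟨i₀⟩ := ‹Nonempty ι›
  obtain ⟨v, hxv, hv⟩ := exists_farthest_reaching_along_path R.isTree.isAcyclic R.preconnected hp
    (R.bag_nonempty_of_core_inter_nonempty hgate (ha i₀) (hcap i₀)) fun u hu => hu
  by_cases hall : ∀ i, v ∈ (P i).support
  · exact ⟨{v}, by simp, .inl fun i => ⟨v, by simp, hall i⟩⟩
  have hexc : ∀ i, v ∉ (P i).support → Nonempty (Excursion R X x v (P i)) := fun i hi =>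
    R.nonempty_excursion hgate hxv (hP i) hi (ha i) (hb i) (hcap i)
  obtain ⟨i₁, hi₁⟩ := not_forall.1 hall
  obtain ⟨i, E, hE⟩ := Excursion.exists_forall_inner_length_le hP (hexc i₁ hi₁).some
  have hQ : (T.induce {w | w ∈ p.support}).Preconnected := p.connected_induce_support.preconnected
  obtain ⟨X', hX', hEX'⟩ := exists_isCompOf_superset (R.connected_induce_iUnion_support E.inner)
    (E.iUnion_inner_subset_diff hQ p.start_mem_support hv)
  obtain ⟨x', hx', hadj⟩ :=
    hgate.exists_root_of_isCompOf R.isTree.connected.preconnected p.start_mem_support hX'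
  refine ⟨{v, E.entry, E.exit}, Finset.card_le_three, .inr ⟨X', x', hX', hx', hadj, ?_⟩⟩
  intro j hj
  simp only [Finset.mem_insert, Finset.mem_singleton, forall_eq_or_imp, forall_eq] at hj
  obtain ⟨hvj, hentry, hexit⟩ := hj
  obtain ⟨E'⟩ := hexc j hvj
  exact (E.core_inter_iUnion_nonempty (hP i).1 E' (hP j) (ha j) (hE j E') hentry hexit).mono
    (Set.inter_subset_inter_right _ hEX')

theorem roundpath_transversal_general {n : ℕ} (hgate : IsGate T X x) (hwin : cutterWins T n X x)
    (hP : ∀ i, IsLongestPath G (P i)) (hcap : ∀ i, (R.core (P i).toSubgraph ∩ X).Nonempty)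
    (ha : ∀ i, ¬ R.S (a i) ⊆ X) (hb : ∀ i, ¬ R.S (b i) ⊆ X) :
    ∃ A : Finset V, A.card ≤ 3 * n ∧ ∀ i, ∃ v ∈ A, v ∈ (P i).support := by
  classical
  induction n generalizing X x ι with
  | zero => exact hwin.elim
  | succ n ih =>
    rcases isEmpty_or_nonempty ι with _ | _
    · exact ⟨∅, by simp, isEmptyElim⟩
    obtain ⟨z, -, p, hp, -, hcut⟩ := hwin
    obtain ⟨B, hB, hhit | ⟨X', x', hX', hx', hadj, hcap'⟩⟩ :=
      R.exists_three_of_cut P hgate hp hP hcap ha hb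
    · exact ⟨B, by omega, hhit⟩
    have hX'X : X' ⊆ X := hX'.2.1.trans Set.sdiff_subset
    have hgate' : IsGate T X' x' := hgate.of_isCompOf R.isTree.isAcyclic
      p.connected_induce_support.preconnected p.start_mem_support hX' hx' hadj
    have hwin' : cutterWins T n X' x' := by
      refine hcut.resolve_left (fun hXp => ?_) X' x' hX' hx' hadj
      exact (hX'.2.1 hx').2 (hXp ▸ hX'X hx')
    obtain ⟨A, hA, hAhit⟩ := ih (ι := {i // ∀ v ∈ B, v ∉ (P i).support}) (fun i => P i)
      hgate' hwin' (fun i => hP i) (fun i => hcap' i i.2)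
      (fun i hsub => ha i (hsub.trans hX'X)) fun i hsub => hb i (hsub.trans hX'X)
    refine ⟨B ∪ A, (Finset.card_union_le B A).trans (by omega), fun i => ?_⟩
    by_cases hBi : ∃ v ∈ B, v ∈ (P i).support
    · exact hBi.imp fun v hv => ⟨Finset.mem_union_left A hv.1, hv.2⟩
    · obtain ⟨v, hvA, hvi⟩ := hAhit ⟨i, by simpa using hBi⟩
      exact ⟨v, Finset.mem_union_right B hvA, hvi⟩

end Game

/-- For a connected chordal `G` with minimal rooted tree representation,
a rooted subtree `X` with root `x`, and a family `𝒫 = P` of longest paths with the core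
capture property for `X` whose endpoints' subtrees all leave `X`, there is a set
`A ⊆ V(G)` intersecting every path of the family with `|A| ≤ 4 · ccg(X, x)`. -/
theorem roundpath_transversal {V W : Type} [Fintype V] [Fintype W] (G : SimpleGraph V)
    (T : SimpleGraph W) (hconn : G.Connected) (hchordal : IsChordal G)
    (R : TreeRep G T) (hmin : R.IsMinimal) (r : W) (x : W)
    {ι : Type} (a b : ι → V) (P : ∀ i : ι, G.Walk (a i) (b i))
    (hP : ∀ i : ι, IsLongestPath G (P i))
    (hcap : ∀ i : ι, (R.core (P i).toSubgraph ∩ rootedSubtree T r x).Nonempty)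
    (hends : ∀ i : ι, (∃ t ∈ R.S (a i), t ∉ rootedSubtree T r x) ∧
      (∃ t ∈ R.S (b i), t ∉ rootedSubtree T r x)) :
    ∃ A : Set V, A.Finite ∧ A.ncard ≤ 4 * ccgOn T (rootedSubtree T r x) x ∧
      ∀ i : ι, ∃ v ∈ A, v ∈ (P i).support := by
  obtain ⟨A, hA, hhit⟩ := roundpath_transversal_general R P (isGate_rootedSubtree T r x)
    (cutterWins_ccgOn (Set.toFinite _) fun p _ => p.end_mem_support) hP hcap
    (fun i => Set.not_subset.2 (hends i).1) fun i => Set.not_subset.2 (hends i).2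
  exact ⟨A, A.finite_toSet, by rw [Set.ncard_coe_finset]; omega, hhit⟩
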